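/- arXiv:1602.03849 — 2 statements merged into one kernel-verified Lean document; each statement's English description precedes it below -/
import Mathlib

section
/- Let P be a Markov kernel on a standard Borel space X and let u : X → [1,∞] be Borel with Pu ≤ a·u + b for some a ∈ (0,1) and b ∈ ℝ. Let p ∈ (1,∞), let ψ : ℕ → ℝ₊ be a nonincreasing function converging to 0 at infinity, and let f ∈ E_u^p. Then for every x ∈ X with u(x) < ∞, (1/n) ∑_{k=0}^{n−1} ψ(k) f(X_k) converges to 0 both ℙ_x-almost everywhere and in L^p(ℙ_x). -/
open MeasureTheory ProbabilityTheory Filter Set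
open scoped ENNReal NNReal

/-- The action of a Markov kernel on `[0,∞]`-valued functions: `Pf(x) = ∫ f(y) P(x,dy)`. -/
noncomputable def kernelOp {X : Type*} [MeasurableSpace X] (P : ProbabilityTheory.Kernel X X)
    (f : X → ℝ≥0∞) : X → ℝ≥0∞ :=
  fun x => ∫⁻ y, f y ∂(P x)

/-- `f ∈ E_u^p` (with `C = X`) with `‖f‖_{E_u^p} ≤ M`: `f` is Borel and
`|f| ≤ M (u − Pu + b)^{1/p}`. -/
def MemDriftSpace {X : Type*} [MeasurableSpace X] (P : ProbabilityTheory.Kernel X X)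
    (u : X → ℝ≥0∞) (b : ℝ≥0) (p : ℝ) (f : X → ℝ) (M : ℝ≥0) : Prop :=
  Measurable f ∧ ∀ x, (‖f x‖₊ : ℝ≥0∞) ≤
    (M : ℝ≥0∞) * (u x - kernelOp P u x + (b : ℝ≥0∞)) ^ (1 / p)

/-- `μ` is the law `ℙ_x` on `X^ℕ` of the canonical Markov chain with kernel `P` started at `x`
(the Ionescu–Tulcea measure). -/
def IsCanonicalChain {X : Type*} [MeasurableSpace X] (P : ProbabilityTheory.Kernel X X)
    (x : X) (μ : Measure (ℕ → X)) : Prop :=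
  IsProbabilityMeasure μ ∧
  μ.map (fun ω => ω 0) = Measure.dirac x ∧
  ∀ n : ℕ, ∀ g : X → ℝ≥0∞, Measurable g →
    ∀ h : (ℕ → X) → ℝ≥0∞,
      Measurable[MeasurableSpace.comap (fun (ω : ℕ → X) (i : Fin (n + 1)) => ω i)
        MeasurableSpace.pi] h →
      ∫⁻ ω, h ω * g (ω (n + 1)) ∂μ = ∫⁻ ω, h ω * kernelOp P g (ω n) ∂μ


/-- The sigma-algebra of the first `n+1` coordinates. -/
abbrev chainF (X : Type*) [MeasurableSpace X] (n : ℕ) : MeasurableSpace (ℕ → X) :=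
  MeasurableSpace.comap (fun (ω : ℕ → X) (i : Fin (n + 1)) => ω i) MeasurableSpace.pi

lemma chainF_le {X : Type*} [MeasurableSpace X] (n : ℕ) :
    chainF X n ≤ MeasurableSpace.pi := by
  apply Measurable.comap_le
  exact measurable_pi_lambda _ fun i => measurable_pi_apply _

lemma chainF_coord {X : Type*} [MeasurableSpace X] {n k : ℕ} (h : k ≤ n) :
    Measurable[chainF X n] (fun ω : ℕ → X => ω k) := by
  have h1 : Measurable[chainF X n] (fun (ω : ℕ → X) (i : Fin (n + 1)) => ω i) :=
    comap_measurable _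
  exact (measurable_pi_apply (⟨k, by omega⟩ : Fin (n+1))).comp h1

lemma measurable_kernelOp {X : Type*} [MeasurableSpace X] (P : Kernel X X) {g : X → ℝ≥0∞}
    (hg : Measurable g) : Measurable (kernelOp P g) := hg.lintegral_kernel

lemma kernelOp_le_const {X : Type*} [MeasurableSpace X] (P : Kernel X X) [IsMarkovKernel P]
    {g : X → ℝ≥0∞} {N : ℝ≥0∞} (hg : ∀ x, g x ≤ N) (x : X) : kernelOp P g x ≤ N := by
  calc kernelOp P g x ≤ ∫⁻ _, N ∂(P x) := lintegral_mono hg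
    _ = N := by simp

lemma chain_cross_nonneg {X : Type*} [MeasurableSpace X] (P : Kernel X X) [IsMarkovKernel P]
    {x : X} {μ : Measure (ℕ → X)} (hμ : IsCanonicalChain P x μ)
    {W : X → ℝ≥0∞} (hW : Measurable W) {N : ℝ≥0} (hN : ∀ y, W y ≤ N) (k : ℕ)
    {h : (ℕ → X) → ℝ} (hh : Measurable[chainF X k] h) (h0 : ∀ ω, 0 ≤ h ω) :
    ∫ ω, h ω * (W (ω (k+1))).toReal ∂μ = ∫ ω, h ω * (kernelOp P W (ω k)).toReal ∂μ := by
  have hh' : Measurable h := hh.mono (chainF_le k) le_rfl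
  have hKW := measurable_kernelOp P hW
  rw [integral_eq_lintegral_of_nonneg_ae, integral_eq_lintegral_of_nonneg_ae]
  · have := hμ.2.2 k W hW (fun ω => ENNReal.ofReal (h ω)) (ENNReal.measurable_ofReal.comp hh)
    congr 1
    convert this using 3 with ω ω
    · rw [ENNReal.ofReal_mul (h0 ω), ENNReal.ofReal_toReal]
      exact ((hN _).trans_lt ENNReal.coe_lt_top).ne
    · rw [ENNReal.ofReal_mul (h0 ω), ENNReal.ofReal_toReal]
      exact ((kernelOp_le_const P hN _).trans_lt ENNReal.coe_lt_top).ne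
  · exact Eventually.of_forall fun ω => mul_nonneg (h0 ω) ENNReal.toReal_nonneg
  · exact (hh'.mul (hKW.comp (measurable_pi_apply k)).ennreal_toReal).aestronglyMeasurable
  · exact Eventually.of_forall fun ω => mul_nonneg (h0 ω) ENNReal.toReal_nonneg
  · exact (hh'.mul (hW.comp (measurable_pi_apply (k+1))).ennreal_toReal).aestronglyMeasurable

lemma integrable_of_bdd {Ω : Type*} [MeasurableSpace Ω] (μ : Measure Ω) [IsFiniteMeasure μ]
    {g : Ω → ℝ} (hg : Measurable g) {C : ℝ} (hC : ∀ ω, |g ω| ≤ C) : Integrable g μ :=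
  Integrable.of_bound hg.aestronglyMeasurable C (Eventually.of_forall hC)

lemma chain_cross {X : Type*} [MeasurableSpace X] (P : Kernel X X) [IsMarkovKernel P]
    {x : X} {μ : Measure (ℕ → X)} (hμ : IsCanonicalChain P x μ)
    {W : X → ℝ≥0∞} (hW : Measurable W) {N : ℝ≥0} (hN : ∀ y, W y ≤ N) (k : ℕ)
    {h : (ℕ → X) → ℝ} (hh : Measurable[chainF X k] h) {C : ℝ} (hC : ∀ ω, |h ω| ≤ C) :
    ∫ ω, h ω * (W (ω (k+1))).toReal ∂μ = ∫ ω, h ω * (kernelOp P W (ω k)).toReal ∂μ := by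
  have := hμ.1
  have hh' : Measurable h := hh.mono (chainF_le k) le_rfl
  have hKW := measurable_kernelOp P hW
  have hC0 : 0 ≤ C := by
    obtain ⟨ω, -⟩ := nonempty_of_measure_ne_zero (μ := μ) (s := Set.univ) (by simp)
    exact (abs_nonneg _).trans (hC ω)
  have hw1 : Measurable fun ω : ℕ → X => (W (ω (k+1))).toReal :=
    (hW.comp (measurable_pi_apply (k+1))).ennreal_toReal
  have hw2 : Measurable fun ω : ℕ → X => (kernelOp P W (ω k)).toReal :=
    (hKW.comp (measurable_pi_apply k)).ennreal_toReal
  have b1 : ∀ ω : ℕ → X, |(W (ω (k+1))).toReal| ≤ N := fun ω => by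
    rw [abs_of_nonneg ENNReal.toReal_nonneg]
    exact ENNReal.toReal_le_coe_of_le_coe (hN _)
  have b2 : ∀ ω : ℕ → X, |(kernelOp P W (ω k)).toReal| ≤ N := fun ω => by
    rw [abs_of_nonneg ENNReal.toReal_nonneg]
    exact ENNReal.toReal_le_coe_of_le_coe (kernelOp_le_const P hN _)
  have e1 := chain_cross_nonneg P hμ hW hN k (h := fun ω => h ω + C) (by fun_prop)
    (fun ω => by linarith [neg_abs_le (h ω), hC ω])
  have e2 := chain_cross_nonneg P hμ hW hN k (h := fun _ => C) (by fun_prop) (fun _ => hC0)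
  have i1 : Integrable (fun ω => h ω * (W (ω (k+1))).toReal) μ :=
    integrable_of_bdd μ (hh'.mul hw1) (C := C * N) fun ω => by
      rw [abs_mul]; exact mul_le_mul (hC ω) (b1 ω) (abs_nonneg _) hC0
  have i2 : Integrable (fun ω => h ω * (kernelOp P W (ω k)).toReal) μ :=
    integrable_of_bdd μ (hh'.mul hw2) (C := C * N) fun ω => by
      rw [abs_mul]; exact mul_le_mul (hC ω) (b2 ω) (abs_nonneg _) hC0
  have j1 : Integrable (fun ω => C * (W (ω (k+1))).toReal) μ :=
    (integrable_of_bdd μ hw1 b1).const_mul C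
  have j2 : Integrable (fun ω => C * (kernelOp P W (ω k)).toReal) μ :=
    (integrable_of_bdd μ hw2 b2).const_mul C
  simp only [add_mul] at e1
  rw [integral_add i1 j1, integral_add i2 j2] at e1
  linarith

/-- Second moment bound for the martingale part. -/
lemma chain_L2 {X : Type*} [MeasurableSpace X] (P : Kernel X X) [IsMarkovKernel P]
    {x : X} {μ : Measure (ℕ → X)} (hμ : IsCanonicalChain P x μ)
    {W : X → ℝ≥0∞} (hW : Measurable W) {N : ℝ≥0} (hN : ∀ y, W y ≤ N)
    {B : ℝ} (hB : ∀ k, ∫ ω, (W (ω k)).toReal ^ 2 ∂μ ≤ B) (n : ℕ) :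
    ∫ ω, (∑ k ∈ Finset.range n,
      ((W (ω (k+1))).toReal - (kernelOp P W (ω k)).toReal)) ^ 2 ∂μ ≤ n * B := by
  have := hμ.1
  have hKW := measurable_kernelOp P hW
  have hw1 : ∀ k, Measurable fun ω : ℕ → X => (W (ω k)).toReal := fun k =>
    (hW.comp (measurable_pi_apply k)).ennreal_toReal
  have hw2 : ∀ k, Measurable fun ω : ℕ → X => (kernelOp P W (ω k)).toReal := fun k =>
    (hKW.comp (measurable_pi_apply k)).ennreal_toReal
  have b1 : ∀ y, |(W y).toReal| ≤ N := fun ω => by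
    rw [abs_of_nonneg ENNReal.toReal_nonneg]
    exact ENNReal.toReal_le_coe_of_le_coe (hN _)
  have b2 : ∀ y, |(kernelOp P W y).toReal| ≤ N := fun ω => by
    rw [abs_of_nonneg ENNReal.toReal_nonneg]
    exact ENNReal.toReal_le_coe_of_le_coe (kernelOp_le_const P hN _)
  induction n with
  | zero => simp
  | succ n ih =>
    set S : (ℕ → X) → ℝ := fun ω => ∑ k ∈ Finset.range n,
      ((W (ω (k+1))).toReal - (kernelOp P W (ω k)).toReal) with hS
    have hSF : Measurable[chainF X n] S := by
      refine Finset.measurable_sum _ fun k hk => ?_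
      have hk' := Finset.mem_range.1 hk
      exact (hW.comp (chainF_coord (n := n) (k := k+1) (by omega))).ennreal_toReal.sub
        (hKW.comp (chainF_coord (n := n) (k := k) (by omega))).ennreal_toReal
    have hSm : Measurable S := hSF.mono (chainF_le n) le_rfl
    have hSb : ∀ ω, |S ω| ≤ n * (N + N) := fun ω => by
      refine (Finset.abs_sum_le_sum_abs _ _).trans ?_
      refine (Finset.sum_le_card_nsmul _ _ ((N:ℝ) + N) fun k _ => ?_).trans (by simp [mul_add])
      exact (abs_sub _ _).trans (add_le_add (b1 _) (b2 _))
    have hQF : Measurable[chainF X n] fun ω : ℕ → X => (kernelOp P W (ω n)).toReal :=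
      (hKW.comp (chainF_coord le_rfl)).ennreal_toReal
    have c1 := chain_cross P hμ hW hN n hSF hSb
    have c2 := chain_cross P hμ hW hN n hQF (fun ω => b2 (ω n))
    have hbd : ∀ {g h : (ℕ → X) → ℝ} {C D : ℝ}, Measurable g → Measurable h →
        (∀ ω, |g ω| ≤ C) → (∀ ω, |h ω| ≤ D) → Integrable (fun ω => g ω * h ω) μ := by
      intro g h C D hg hh hC hD
      refine integrable_of_bdd μ (hg.mul hh) (C := C * D) fun ω => ?_
      rw [abs_mul]
      exact mul_le_mul (hC ω) (hD ω) (abs_nonneg _) ((abs_nonneg _).trans (hC ω))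
    have i1 := hbd hSm hSm hSb hSb
    have i2 := hbd hSm (hw1 (n+1)) hSb (fun ω => b1 _)
    have i3 := hbd hSm (hw2 n) hSb (fun ω => b2 _)
    have i4 := hbd (hw1 (n+1)) (hw1 (n+1)) (fun ω => b1 _) (fun ω => b1 _)
    have i5 := hbd (hw2 n) (hw1 (n+1)) (fun ω => b2 _) (fun ω => b1 _)
    have i6 := hbd (hw2 n) (hw2 n) (fun ω => b2 _) (fun ω => b2 _)
    have key : ∫ ω, (∑ k ∈ Finset.range (n+1),
      ((W (ω (k+1))).toReal - (kernelOp P W (ω k)).toReal)) ^ 2 ∂μ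
      = ∫ ω, ((S ω * S ω + (2 * (S ω * (W (ω (n+1))).toReal)
          - 2 * (S ω * (kernelOp P W (ω n)).toReal)))
        + (((W (ω (n+1))).toReal * (W (ω (n+1))).toReal
          - 2 * ((kernelOp P W (ω n)).toReal * (W (ω (n+1))).toReal))
          + (kernelOp P W (ω n)).toReal * (kernelOp P W (ω n)).toReal)) ∂μ := by
      congr 1 with ω
      rw [Finset.sum_range_succ]
      change (S ω + _) ^ 2 = _
      ring
    have k1 : Integrable (fun ω => 2 * (S ω * (W (ω (n+1))).toReal)
          - 2 * (S ω * (kernelOp P W (ω n)).toReal)) μ := (i2.const_mul 2).sub (i3.const_mul 2)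
    have k2 : Integrable (fun ω => S ω * S ω + (2 * (S ω * (W (ω (n+1))).toReal)
          - 2 * (S ω * (kernelOp P W (ω n)).toReal))) μ := i1.add k1
    have k3 : Integrable (fun ω => (W (ω (n+1))).toReal * (W (ω (n+1))).toReal
          - 2 * ((kernelOp P W (ω n)).toReal * (W (ω (n+1))).toReal)) μ :=
      i4.sub (i5.const_mul 2)
    have k4 : Integrable (fun ω => ((W (ω (n+1))).toReal * (W (ω (n+1))).toReal
          - 2 * ((kernelOp P W (ω n)).toReal * (W (ω (n+1))).toReal))
          + (kernelOp P W (ω n)).toReal * (kernelOp P W (ω n)).toReal) μ := k3.add i6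
    rw [key, integral_add k2 k4, integral_add i1 k1,
      integral_sub (i2.const_mul 2) (i3.const_mul 2), integral_add k3 i6,
      integral_sub i4 (i5.const_mul 2), integral_const_mul, integral_const_mul,
      integral_const_mul, c1, c2]
    have hBn := hB (n+1)
    simp only [pow_two] at hBn ih
    have : 0 ≤ ∫ ω, (kernelOp P W (ω n)).toReal * (kernelOp P W (ω n)).toReal ∂μ :=
      integral_nonneg fun ω => mul_self_nonneg _
    push_cast
    linarith

lemma cesaro_weighted {A ψ : ℕ → ℝ} (hA : ∀ k, 0 ≤ A k) (hψ : Tendsto ψ atTop (nhds 0))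
    {F : ℕ → ℝ} (hF : ∀ k, |F k| ≤ A k) {C : ℝ}
    (hC : ∀ᶠ n : ℕ in atTop, ∑ k ∈ Finset.range n, A k ≤ C * n) :
    Tendsto (fun n : ℕ => (n : ℝ)⁻¹ * ∑ k ∈ Finset.range n, ψ k * F k) atTop (nhds 0) := by
  have h1 : (fun k => ψ k * F k) =o[atTop] (fun k => A k + 1) := by
    have hb : F =O[atTop] (fun k => A k + 1) := by
      refine Asymptotics.IsBigO.of_bound 1 (Eventually.of_forall fun k => ?_)
      rw [Real.norm_eq_abs, Real.norm_of_nonneg (by linarith [hA k])]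
      linarith [hF k]
    simpa using ((Asymptotics.isLittleO_one_iff ℝ).2 hψ).mul_isBigO hb
  have h2 := h1.sum_range (fun k => add_nonneg (hA k) zero_le_one) (by
    refine tendsto_atTop_mono (fun n => ?_) tendsto_natCast_atTop_atTop
    rw [Finset.sum_add_distrib]
    simpa using Finset.sum_nonneg fun k _ => hA k)
  have h3 : (fun n : ℕ => ∑ k ∈ Finset.range n, (A k + 1)) =O[atTop] (fun n : ℕ => (n:ℝ)) := by
    refine Asymptotics.IsBigO.of_bound (C+1) ?_
    filter_upwards [hC] with n hn
    rw [Real.norm_of_nonneg (Finset.sum_nonneg fun k _ => by linarith [hA k]),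
      Real.norm_of_nonneg (by positivity), Finset.sum_add_distrib]
    simp
    linarith
  have h4 := (h2.trans_isBigO h3).tendsto_div_nhds_zero
  refine h4.congr fun n => ?_
  rw [div_eq_inv_mul]

lemma chain_moment {X : Type*} [MeasurableSpace X] (P : Kernel X X)
    {x : X} {μ : Measure (ℕ → X)} (hμ : IsCanonicalChain P x μ)
    {u : X → ℝ≥0∞} (hu : Measurable u) {a b K : ℝ≥0∞}
    (hdrift : ∀ x, kernelOp P u x ≤ a * u x + b) (hx : u x ≤ K) (hK : a * K + b ≤ K) (k : ℕ) :
    ∫⁻ ω, u (ω k) ∂μ ≤ K := by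
  have := hμ.1
  induction k with
  | zero =>
    have : ∫⁻ ω, u (ω 0) ∂μ = ∫⁻ y, u y ∂(μ.map (fun ω => ω 0)) :=
      (lintegral_map hu (measurable_pi_apply 0)).symm
    rw [this, hμ.2.1, lintegral_dirac' _ hu]
    exact hx
  | succ k ih =>
    have h1 := hμ.2.2 k u hu (fun _ => 1) measurable_const
    simp only [one_mul] at h1
    rw [h1]
    calc ∫⁻ ω, kernelOp P u (ω k) ∂μ ≤ ∫⁻ ω, (a * u (ω k) + b) ∂μ :=
          lintegral_mono fun ω => hdrift _
      _ = a * ∫⁻ ω, u (ω k) ∂μ + b := by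
        rw [lintegral_add_right _ measurable_const, lintegral_const_mul _
          (show Measurable fun ω : ℕ → X => u (ω k) from hu.comp (measurable_pi_apply k))]
        simp
      _ ≤ a * K + b := by gcongr
      _ ≤ K := hK

lemma kernelOp_rpow_le {X : Type*} [MeasurableSpace X] (P : Kernel X X) [IsMarkovKernel P]
    {u : X → ℝ≥0∞} (hu : Measurable u) {r : ℝ} (hr0 : 0 < r) (hr1 : r ≤ 1) (x : X) :
    kernelOp P (fun y => u y ^ r) x ≤ kernelOp P u x ^ r := by
  have h := eLpNorm'_le_eLpNorm'_of_exponent_le (f := u) hr0 hr1 (P x)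
    hu.aestronglyMeasurable
  simp only [eLpNorm', enorm_eq_self, ENNReal.rpow_one, div_one] at h
  have h2 := ENNReal.rpow_le_rpow h hr0.le
  rwa [← ENNReal.rpow_mul, one_div_mul_cancel hr0.ne', ENNReal.rpow_one] at h2

lemma ae_growth {X : Type*} [MeasurableSpace X] (P : Kernel X X) [IsMarkovKernel P]
    {x : X} {μ : Measure (ℕ → X)} (hμ : IsCanonicalChain P x μ)
    {u : X → ℝ≥0∞} (hu : Measurable u) {a : ℝ} (ha0 : 0 < a) (ha1 : a < 1) {b : ℝ≥0}
    (hdrift : ∀ x, kernelOp P u x ≤ ENNReal.ofReal a * u x + b)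
    {K : ℝ} (hK0 : 0 ≤ K) (hK : ∀ k, ∫⁻ ω, u (ω k) ∂μ ≤ ENNReal.ofReal K)
    {q : ℝ} (hq1 : 1 < q) (hq2 : q ≤ 2) :
    ∃ L : ℝ, ∀ᵐ ω ∂μ, ∀ᶠ j : ℕ in atTop,
      ∑ k ∈ Finset.range (2 ^ j), (u (ω k) ^ (1 / q)).toReal ≤ L * 2 ^ j := by
  have := hμ.1
  have hq0 : 0 < q := by linarith
  have hr0 : 0 < 1 / q := by positivity
  have hr1 : 1 / q ≤ 1 := by rw [div_le_one hq0]; exact hq1.le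
  set v : X → ℝ≥0∞ := fun y => u y ^ (1 / q) with hv
  have hvm : Measurable v := hu.pow_const _
  set α : ℝ := a ^ (1 / q) with hα
  set β : ℝ≥0 := b ^ (1 / q) with hβ
  have hα0 : 0 ≤ α := by positivity
  have hα1 : α < 1 := Real.rpow_lt_one ha0.le ha1 hr0
  have hvd : ∀ y, kernelOp P v y ≤ ENNReal.ofReal α * v y + β := fun y => by
    calc kernelOp P v y ≤ kernelOp P u y ^ (1 / q) := kernelOp_rpow_le P hu hr0 hr1 y
      _ ≤ (ENNReal.ofReal a * u y + b) ^ (1 / q) := ENNReal.rpow_le_rpow (hdrift y) hr0.le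
      _ ≤ (ENNReal.ofReal a * u y) ^ (1 / q) + (b : ℝ≥0∞) ^ (1 / q) :=
        ENNReal.rpow_add_le_add_rpow _ _ hr0.le hr1
      _ = _ := by
        rw [ENNReal.mul_rpow_of_nonneg _ _ hr0.le, ENNReal.ofReal_rpow_of_pos ha0,
          ENNReal.coe_rpow_of_nonneg _ hr0.le]
  have hum : ∀ k, Measurable fun ω : ℕ → X => u (ω k) := fun k =>
    hu.comp (measurable_pi_apply k)
  have hfin : ∀ᵐ ω ∂μ, ∀ k, u (ω k) < ∞ := by
    rw [ae_all_iff]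
    intro k
    exact ae_lt_top (hum k) ((hK k).trans_lt ENNReal.ofReal_lt_top).ne
  -- truncations
  set W : ℕ → X → ℝ≥0∞ := fun j y => min (v y) ((2 ^ j : ℝ≥0) : ℝ≥0∞) with hW
  have hWm : ∀ j, Measurable (W j) := fun j => hvm.min measurable_const
  have hWN : ∀ j y, W j y ≤ ((2 ^ j : ℝ≥0) : ℝ≥0∞) := fun j y => min_le_right _ _
  have hWv : ∀ j y, W j y ≤ v y := fun j y => min_le_left _ _
  have hB : ∀ j k, ∫ ω, (W j (ω k)).toReal ^ 2 ∂μ ≤ ((2:ℝ) ^ j) ^ (2 - q) * K := by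
    intro j k
    have hint : Integrable (fun ω : ℕ → X => (u (ω k)).toReal) μ :=
      integrable_toReal_of_lintegral_ne_top (hum k).aemeasurable
        ((hK k).trans_lt ENNReal.ofReal_lt_top).ne
    calc ∫ ω, (W j (ω k)).toReal ^ 2 ∂μ
        ≤ ∫ ω, ((2:ℝ) ^ j) ^ (2 - q) * (u (ω k)).toReal ∂μ := by
          refine integral_mono_of_nonneg (Eventually.of_forall fun ω => sq_nonneg _)
            (hint.const_mul _) ?_
          filter_upwards [hfin] with ω hω
          have h1 : (W j (ω k)).toReal ≤ 2 ^ j := by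
            have := ENNReal.toReal_le_coe_of_le_coe (hWN j (ω k))
            simpa using this
          have h2 : (W j (ω k)).toReal ≤ (u (ω k)).toReal ^ (1 / q) := by
            rw [ENNReal.toReal_rpow]
            exact ENNReal.toReal_mono (ENNReal.rpow_lt_top_of_nonneg hr0.le (hω k).ne).ne
              (hWv j (ω k))
          have h0 : 0 ≤ (W j (ω k)).toReal := ENNReal.toReal_nonneg
          calc (W j (ω k)).toReal ^ 2 = (W j (ω k)).toReal ^ (2 - q) * (W j (ω k)).toReal ^ q := by
                rw [← Real.rpow_add_of_nonneg h0 (by linarith) hq0.le]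
                rw [sub_add_cancel]; norm_cast
            _ ≤ ((2:ℝ) ^ j) ^ (2 - q) * ((u (ω k)).toReal ^ (1 / q)) ^ q := by
                gcongr
            _ = _ := by
                rw [← Real.rpow_mul ENNReal.toReal_nonneg, one_div_mul_cancel hq0.ne',
                  Real.rpow_one]
      _ = ((2:ℝ) ^ j) ^ (2 - q) * ∫ ω, (u (ω k)).toReal ∂μ := integral_const_mul _ _
      _ ≤ ((2:ℝ) ^ j) ^ (2 - q) * K := by
          gcongr
          rw [integral_toReal (hum k).aemeasurable (by filter_upwards [hfin] with ω hω using hω k)]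
          exact ENNReal.toReal_le_of_le_ofReal hK0 (hK k)
  set D : ℕ → (ℕ → X) → ℝ := fun j ω => ∑ k ∈ Finset.range (2 ^ j),
      ((W j (ω (k+1))).toReal - (kernelOp P (W j) (ω k)).toReal) with hD
  have hDm : ∀ j, Measurable (D j) := fun j => by
    refine Finset.measurable_sum _ fun k _ => ?_
    exact ((hWm j).comp (measurable_pi_apply (k+1))).ennreal_toReal.sub
      ((measurable_kernelOp P (hWm j)).comp (measurable_pi_apply k)).ennreal_toReal
  set ρ : ℝ := 2 ^ (1 - q) with hρ
  have hρ0 : 0 ≤ ρ := by positivity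
  have hρ1 : ρ < 1 := Real.rpow_lt_one_of_one_lt_of_neg one_lt_two (by linarith)
  have hρj : ∀ j : ℕ, ((2:ℝ) ^ j) ^ (1 - q) = ρ ^ j := fun j => by
    rw [hρ, ← Real.rpow_natCast, ← Real.rpow_natCast, ← Real.rpow_mul (by norm_num),
      ← Real.rpow_mul (by norm_num), mul_comm]
  have hsum : ∑' j : ℕ, ENNReal.ofReal (K * ρ ^ j) ≠ ∞ :=
    ((summable_geometric_of_lt_one hρ0 hρ1).mul_left K).tsum_ofReal_ne_top
  -- the two Borel-Cantelli arguments
  have bc1 : ∀ᵐ ω ∂μ, ∀ᶠ j : ℕ in atTop, ω ∉ ⋃ k ∈ Finset.range (2 ^ j),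
      {ω : ℕ → X | ENNReal.ofReal (((2:ℝ) ^ j) ^ q) ≤ u (ω k)} := by
    apply ae_eventually_notMem
    refine ne_top_of_le_ne_top hsum (ENNReal.tsum_le_tsum fun j => ?_)
    have hpos : (0:ℝ) < ((2:ℝ) ^ j) ^ q := by positivity
    calc _ ≤ ∑ k ∈ Finset.range (2 ^ j),
          μ {ω : ℕ → X | ENNReal.ofReal (((2:ℝ) ^ j) ^ q) ≤ u (ω k)} :=
          measure_biUnion_finset_le _ _
      _ ≤ ∑ k ∈ Finset.range (2 ^ j), ENNReal.ofReal (K / ((2:ℝ) ^ j) ^ q) := by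
          refine Finset.sum_le_sum fun k _ => ?_
          refine (meas_ge_le_lintegral_div (hum k).aemeasurable
            (ENNReal.ofReal_pos.2 hpos).ne' ENNReal.ofReal_ne_top).trans ?_
          rw [ENNReal.ofReal_div_of_pos hpos]
          exact ENNReal.div_le_div_right (hK k) _
      _ = ENNReal.ofReal (K * ρ ^ j) := by
          rw [Finset.sum_const, Finset.card_range, ← ENNReal.ofReal_nsmul, nsmul_eq_mul,
            ← hρj, Real.rpow_sub (by positivity), Real.rpow_one]
          congr 1
          push_cast
          ring
  have bc2 : ∀ᵐ ω ∂μ, ∀ᶠ j : ℕ in atTop, ω ∉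
      {ω : ℕ → X | ((2:ℝ) ^ j) ^ 2 ≤ D j ω ^ 2} := by
    apply ae_eventually_notMem
    refine ne_top_of_le_ne_top hsum (ENNReal.tsum_le_tsum fun j => ?_)
    have hpos : (0:ℝ) < (2:ℝ) ^ j := by positivity
    have hDb : ∀ ω, |D j ω| ≤ 2 ^ j * (2 ^ j + 2 ^ j) := fun ω => by
      refine (Finset.abs_sum_le_sum_abs _ _).trans ?_
      refine (Finset.sum_le_card_nsmul _ _ ((2:ℝ) ^ j + 2 ^ j) fun k _ => ?_).trans
        (by simp [mul_add])
      refine (abs_sub _ _).trans (add_le_add ?_ ?_)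
      · rw [abs_of_nonneg ENNReal.toReal_nonneg]
        simpa using ENNReal.toReal_le_coe_of_le_coe (hWN j (ω (k+1)))
      · rw [abs_of_nonneg ENNReal.toReal_nonneg]
        simpa using ENNReal.toReal_le_coe_of_le_coe (kernelOp_le_const P (hWN j) (ω k))
    have hDi : Integrable (fun ω => D j ω ^ 2) μ :=
      integrable_of_bdd μ ((hDm j).pow_const 2) (C := (2 ^ j * (2 ^ j + 2 ^ j)) ^ 2) fun ω => by
        rw [abs_pow]
        exact pow_le_pow_left₀ (abs_nonneg _) (hDb ω) 2
    have h1 := mul_meas_ge_le_integral_of_nonneg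
      (Eventually.of_forall fun ω => sq_nonneg (D j ω)) hDi (((2:ℝ) ^ j) ^ 2)
    have h2 := chain_L2 P hμ (hWm j) (hWN j) (hB j) (2 ^ j)
    have h3 := h1.trans h2
    rw [← ofReal_measureReal]
    apply ENNReal.ofReal_le_ofReal
    have h4 : ((2:ℝ) ^ j) ^ 2 * (K * ρ ^ j) = ((2 ^ j : ℕ) : ℝ) * (((2:ℝ) ^ j) ^ (2 - q) * K) := by
      rw [← hρj, show 2 - q = 1 + (1 - q) by ring, Real.rpow_add hpos, Real.rpow_one]
      push_cast
      ring
    rw [← h4] at h3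
    exact le_of_mul_le_mul_left h3 (by positivity)
  refine ⟨(2 + β) / (1 - α), ?_⟩
  filter_upwards [hfin, bc1, bc2] with ω hω h1 h2
  filter_upwards [h1, h2] with j h1 h2
  have hvt : ∀ k, v (ω k) ≠ ∞ := fun k => (ENNReal.rpow_lt_top_of_nonneg hr0.le (hω k).ne).ne
  have hpos : (0:ℝ) < (2:ℝ) ^ j := by positivity
  have hWeq : ∀ k < 2 ^ j, W j (ω k) = v (ω k) := by
    intro k hk
    simp only [Set.mem_iUnion, Finset.mem_range, Set.mem_ofPred_eq, not_exists, not_le] at h1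
    have h3 := h1 k hk
    apply min_eq_left
    have h4 := ENNReal.rpow_le_rpow h3.le hr0.le
    rw [ENNReal.ofReal_rpow_of_pos (by positivity), ← Real.rpow_mul hpos.le,
      mul_one_div_cancel hq0.ne', Real.rpow_one] at h4
    refine h4.trans_eq ?_
    rw [← ENNReal.ofReal_coe_nnreal]
    simp
  have h5 : D j ω < 2 ^ j := by
    simp only [not_le] at h2
    exact lt_of_pow_lt_pow_left₀ 2 hpos.le h2
  have hTe : ∑ k ∈ Finset.range (2 ^ j), (v (ω k)).toReal
      = ∑ k ∈ Finset.range (2 ^ j), (W j (ω k)).toReal :=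
    Finset.sum_congr rfl fun k hk => by rw [hWeq k (Finset.mem_range.1 hk)]
  set T := ∑ k ∈ Finset.range (2 ^ j), (v (ω k)).toReal with hT
  have h6 : ∑ k ∈ Finset.range (2 ^ j), (kernelOp P (W j) (ω k)).toReal ≤ α * T + 2 ^ j * β := by
    calc _ ≤ ∑ k ∈ Finset.range (2 ^ j), (α * (v (ω k)).toReal + β) := by
          refine Finset.sum_le_sum fun k _ => ?_
          have h7 : kernelOp P (W j) (ω k) ≤ ENNReal.ofReal α * v (ω k) + β :=
            (lintegral_mono (hWv j)).trans (hvd _)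
          have h8 := ENNReal.toReal_mono (ENNReal.add_ne_top.2
            ⟨ENNReal.mul_ne_top ENNReal.ofReal_ne_top (hvt k), ENNReal.coe_ne_top⟩) h7
          rwa [ENNReal.toReal_add (ENNReal.mul_ne_top ENNReal.ofReal_ne_top (hvt k))
            ENNReal.coe_ne_top, ENNReal.toReal_mul, ENNReal.toReal_ofReal hα0,
            ENNReal.coe_toReal] at h8
      _ = _ := by
          rw [Finset.sum_add_distrib, ← Finset.mul_sum, ← hT]
          simp
  have h7 : ∑ k ∈ Finset.range (2 ^ j), (W j (ω (k+1))).toReal ≥ T - 2 ^ j := by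
    have h8 := Finset.sum_range_succ (fun k => (W j (ω k)).toReal) (2 ^ j)
    rw [Finset.sum_range_succ', ← hTe] at h8
    have h9 : (W j (ω 0)).toReal ≤ 2 ^ j := by
      simpa using ENNReal.toReal_le_coe_of_le_coe (hWN j (ω 0))
    have h10 : 0 ≤ (W j (ω (2 ^ j))).toReal := ENNReal.toReal_nonneg
    linarith
  have h8 : D j ω = ∑ k ∈ Finset.range (2 ^ j), (W j (ω (k+1))).toReal
      - ∑ k ∈ Finset.range (2 ^ j), (kernelOp P (W j) (ω k)).toReal := Finset.sum_sub_distrib _ _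
  change T ≤ _
  rw [div_mul_eq_mul_div, le_div_iff₀ (by linarith)]
  linarith

lemma growth_of_dyadic {A : ℕ → ℝ} (hA : ∀ k, 0 ≤ A k) {L : ℝ}
    (h : ∀ᶠ j : ℕ in atTop, ∑ k ∈ Finset.range (2 ^ j), A k ≤ L * 2 ^ j) :
    ∀ᶠ n : ℕ in atTop, ∑ k ∈ Finset.range n, A k ≤ (2 * L) * n := by
  obtain ⟨j0, hj0⟩ := eventually_atTop.1 h
  filter_upwards [eventually_ge_atTop (2 ^ j0)] with n hn
  have hn0 : n ≠ 0 := by have := Nat.two_pow_pos j0; omega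
  have hlt := Nat.lt_pow_succ_log_self (b := 2) (by norm_num) n
  have hle := Nat.pow_log_le_self 2 hn0
  have hj : j0 ≤ Nat.log 2 n := (Nat.le_log_iff_pow_le (by norm_num) hn0).2 hn
  have h1 := hj0 (Nat.log 2 n + 1) (by omega)
  have hL : 0 ≤ L := by
    have := (Finset.sum_nonneg fun k _ => hA k).trans h1
    exact nonneg_of_mul_nonneg_left this (by positivity)
  calc ∑ k ∈ Finset.range n, A k ≤ ∑ k ∈ Finset.range (2 ^ (Nat.log 2 n + 1)), A k :=
        Finset.sum_le_sum_of_subset_of_nonneg (Finset.range_mono hlt.le) fun k _ _ => hA k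
    _ ≤ L * 2 ^ (Nat.log 2 n + 1) := h1
    _ = (2 * L) * ((2 ^ Nat.log 2 n : ℕ) : ℝ) := by push_cast; ring
    _ ≤ (2 * L) * n := by gcongr

theorem stmt7 {X : Type*} [MeasurableSpace X] [StandardBorelSpace X]
    (P : ProbabilityTheory.Kernel X X) [IsMarkovKernel P]
    (u : X → ℝ≥0∞) (hmeas : Measurable u) (hone : ∀ x, 1 ≤ u x)
    (a : ℝ) (ha0 : 0 < a) (ha1 : a < 1) (b : ℝ≥0)
    (hdrift : ∀ x, kernelOp P u x ≤ ENNReal.ofReal a * u x + (b : ℝ≥0∞))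
    (p : ℝ) (hp : 1 < p)
    (ψ : ℕ → ℝ) (hψ0 : ∀ n, 0 ≤ ψ n) (hψmono : Antitone ψ)
    (hψlim : Tendsto ψ atTop (nhds 0))
    (f : X → ℝ) (M : ℝ≥0) (hf : MemDriftSpace P u b p f M)
    (x : X) (hx : u x < ∞)
    (μ : Measure (ℕ → X)) (hμ : IsCanonicalChain P x μ) :
    (∀ᵐ ω ∂μ, Tendsto
      (fun n : ℕ => (n : ℝ)⁻¹ * ∑ k ∈ Finset.range n, ψ k * f (ω k))
      atTop (nhds 0)) ∧
    Tendsto (fun n : ℕ => eLpNorm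
      (fun ω => (n : ℝ)⁻¹ * ∑ k ∈ Finset.range n, ψ k * f (ω k))
      (ENNReal.ofReal p) μ) atTop (nhds 0) := by
  have := hμ.1
  have hp0 : 0 < p := by linarith
  obtain ⟨hfm, hfb⟩ := hf
  have hum : ∀ k, Measurable fun ω : ℕ → X => u (ω k) := fun k =>
    hmeas.comp (measurable_pi_apply k)
  -- uniform moment bound
  set K : ℝ := (u x).toReal + b / (1 - a) with hKdef
  have h1a : 0 < 1 - a := by linarith
  have hK0 : 0 ≤ K := by positivity
  have hK : ∀ k, ∫⁻ ω, u (ω k) ∂μ ≤ ENNReal.ofReal K := by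
    refine chain_moment P hμ hmeas hdrift ?_ ?_
    · rw [← ENNReal.ofReal_toReal hx.ne]
      apply ENNReal.ofReal_le_ofReal
      have : 0 ≤ (b:ℝ) / (1 - a) := by positivity
      linarith
    · rw [← ENNReal.ofReal_mul ha0.le, ← ENNReal.ofReal_coe_nnreal,
        ← ENNReal.ofReal_add (by positivity) (by positivity)]
      apply ENNReal.ofReal_le_ofReal
      have h2 : (b:ℝ) / (1 - a) * (1 - a) = b := div_mul_cancel₀ _ h1a.ne'
      have h3 : 0 ≤ (u x).toReal := ENNReal.toReal_nonneg
      have h4 : a * K + b = K - (1 - a) * (u x).toReal := by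
        rw [hKdef]; linear_combination -h2
      rw [h4]
      have := mul_nonneg h1a.le h3
      linarith
  have hfu : ∀ y, ‖f y‖ₑ ≤ M * (u y + b) ^ (1 / p) := fun y => by
    refine (hfb y).trans ?_
    gcongr
    exact tsub_le_self
  constructor
  · set q := min p 2 with hq
    have hq1 : 1 < q := lt_min hp (by norm_num)
    have hq0 : 0 < q := by linarith
    obtain ⟨L, hL⟩ := ae_growth P hμ hmeas ha0 ha1 hdrift hK0 hK hq1 (min_le_right p 2)
    have hfin : ∀ᵐ ω ∂μ, ∀ k, u (ω k) < ∞ := by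
      rw [ae_all_iff]
      intro k
      exact ae_lt_top (hum k) ((hK k).trans_lt ENNReal.ofReal_lt_top).ne
    set M' : ℝ≥0 := M * (1 + b) ^ (1 / q) with hM'
    have hfv : ∀ y, ‖f y‖ₑ ≤ M' * u y ^ (1 / q) := fun y => by
      have h1 : u y + b ≤ (1 + b) * u y := by
        rw [add_mul, one_mul]
        gcongr
        exact le_mul_of_one_le_right (zero_le) (hone y)
      have h2 : 1 ≤ (1 + (b:ℝ≥0∞)) * u y :=
        (hone y).trans (le_self_add.trans h1)
      calc ‖f y‖ₑ ≤ M * (u y + b) ^ (1 / p) := hfu y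
        _ ≤ M * ((1 + b) * u y) ^ (1 / p) := by gcongr
        _ ≤ M * ((1 + b) * u y) ^ (1 / q) := by
          gcongr
          exact min_le_left _ _
        _ = _ := by
          rw [ENNReal.mul_rpow_of_nonneg _ _ (by positivity), ← mul_assoc, hM',
            ENNReal.coe_mul, ENNReal.coe_rpow_of_nonneg _ (by positivity)]
          simp
    filter_upwards [hL, hfin] with ω hω hωf
    have h1 := growth_of_dyadic (fun k => ENNReal.toReal_nonneg) hω
    refine cesaro_weighted (A := fun k => M' * (u (ω k) ^ (1 / q)).toReal)
      (C := M' * (2 * L)) (fun k => by positivity) hψlim (fun k => ?_) ?_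
    · have h2 := ENNReal.toReal_mono (ENNReal.mul_ne_top ENNReal.coe_ne_top
        (ENNReal.rpow_lt_top_of_nonneg (by positivity) (hωf k).ne).ne) (hfv (ω k))
      simpa using h2
    · filter_upwards [h1] with n hn
      rw [← Finset.mul_sum, mul_assoc]
      exact mul_le_mul_of_nonneg_left hn M'.2
  · have hpE : ENNReal.ofReal p ≠ 0 := (ENNReal.ofReal_pos.2 hp0).ne'
    have hp1 : 1 ≤ ENNReal.ofReal p := by
      rw [← ENNReal.ofReal_one]; exact ENNReal.ofReal_le_ofReal hp.le
    set C : ℝ≥0∞ := ((M:ℝ≥0∞) ^ p * (ENNReal.ofReal K + b)) ^ (1 / p) with hC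
    have hCt : C ≠ ∞ := by
      refine (ENNReal.rpow_lt_top_of_nonneg (by positivity) (ENNReal.mul_ne_top ?_ ?_)).ne
      · exact (ENNReal.rpow_lt_top_of_nonneg hp0.le ENNReal.coe_ne_top).ne
      · exact ENNReal.add_ne_top.2 ⟨ENNReal.ofReal_ne_top, ENNReal.coe_ne_top⟩
    have hfk : ∀ k, Measurable fun ω : ℕ → X => f (ω k) := fun k =>
      hfm.comp (measurable_pi_apply k)
    have hnorm : ∀ k, eLpNorm (fun ω : ℕ → X => f (ω k)) (ENNReal.ofReal p) μ ≤ C := fun k => by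
      rw [eLpNorm_eq_lintegral_rpow_enorm_toReal hpE ENNReal.ofReal_ne_top,
        ENNReal.toReal_ofReal hp0.le, hC]
      refine ENNReal.rpow_le_rpow ?_ (by positivity)
      calc ∫⁻ ω, ‖f (ω k)‖ₑ ^ p ∂μ ≤ ∫⁻ ω, (M:ℝ≥0∞) ^ p * (u (ω k) + b) ∂μ := by
            refine lintegral_mono fun ω => ?_
            refine (ENNReal.rpow_le_rpow (hfu (ω k)) hp0.le).trans_eq ?_
            rw [ENNReal.mul_rpow_of_nonneg _ _ hp0.le, ← ENNReal.rpow_mul,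
              one_div_mul_cancel hp0.ne', ENNReal.rpow_one]
        _ = (M:ℝ≥0∞) ^ p * (∫⁻ ω, u (ω k) ∂μ + b) := by
            rw [lintegral_const_mul _ ((hum k).add_const _),
              lintegral_add_right _ measurable_const]
            simp
        _ ≤ _ := by gcongr; exact hK k
    have hbound : ∀ n : ℕ, eLpNorm
        (fun ω : ℕ → X => (n : ℝ)⁻¹ * ∑ k ∈ Finset.range n, ψ k * f (ω k)) (ENNReal.ofReal p) μ
        ≤ ENNReal.ofReal ((n:ℝ)⁻¹ * ∑ k ∈ Finset.range n, ψ k) * C := fun n => by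
      have e1 : (fun ω : ℕ → X => (n : ℝ)⁻¹ * ∑ k ∈ Finset.range n, ψ k * f (ω k))
          = ∑ k ∈ Finset.range n, ((n:ℝ)⁻¹ * ψ k) • (fun ω : ℕ → X => f (ω k)) := by
        ext ω
        simp [Finset.mul_sum, mul_assoc]
      rw [e1]
      refine (eLpNorm_sum_le (fun k _ => ((hfk k).const_smul _).aestronglyMeasurable) hp1).trans ?_
      rw [Finset.mul_sum, ENNReal.ofReal_sum_of_nonneg
        (fun k _ => mul_nonneg (by positivity) (hψ0 k)), Finset.sum_mul]
      refine Finset.sum_le_sum fun k _ => ?_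
      rw [eLpNorm_const_smul, Real.enorm_of_nonneg (mul_nonneg (by positivity) (hψ0 k))]
      gcongr
      exact hnorm k
    have hlim : Tendsto (fun n : ℕ => ENNReal.ofReal ((n:ℝ)⁻¹ * ∑ k ∈ Finset.range n, ψ k) * C)
        atTop (nhds 0) := by
      have h1 := ENNReal.Tendsto.mul_const (b := C)
        (ENNReal.tendsto_ofReal hψlim.cesaro) (Or.inr hCt)
      simpa using h1
    exact tendsto_of_tendsto_of_tendsto_of_le_of_le tendsto_const_nhds hlim
      (fun n => zero_le) hbound
end

section
/- Let ρ be a Borel probability measure on SL_d(ℤ) with Markov operator Pf(x) = ∫ f(gx) dρ(g) on the torus 𝕋^d. Let δ > 0, a ∈ (0,1), b ∈ ℝ, and let u₀ : 𝕋^d → [0,∞] be Borel with Pu₀ ≤ a·u₀ + b. Let φ : ℕ → ℝ₊* be strictly increasing with ∑_{n≥1} n^d/φ(n)^δ < ∞, and define for x ∈ 𝕋^d: u_φ(x) = 1 + ∑_{Q∈ℕ*} φ(Q)^{−δ} ∑_{p ∈ X_Q} u₀(x − p), where X_Q is the set of primitive points of denominator Q. Then there exist a' ∈ (0,1) and b'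 ∈ ℝ such that P u_φ ≤ a'·u_φ + b'. -/
open MeasureTheory Filter Set Matrix
open scoped ENNReal NNReal Real

abbrev Torus (d : ℕ) := Fin d → UnitAddCircle

abbrev SL (d : ℕ) := Matrix.SpecialLinearGroup (Fin d) ℤ

/-- `SL_d(ℤ)` is a countable discrete group; we endow it with the discrete σ-algebra. -/
instance (d : ℕ) : MeasurableSpace (SL d) := ⊤

/-- The real matrix associated to an element of `SL_d(ℤ)`. -/
def matR {d : ℕ} (g : SL d) : Matrix (Fin d) (Fin d) ℝ :=
  (g : Matrix (Fin d) (Fin d) ℤ).map ((↑) : ℤ → ℝ)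

/-- The linear action of `SL_d(ℤ)` on `ℝ^d/ℤ^d`. -/
noncomputable def torusSMul {d : ℕ} (g : SL d) (x : Torus d) : Torus d :=
  fun i => ∑ j, (g : Matrix (Fin d) (Fin d) ℤ) i j • x j

/-- A norm on `SL_d(ℤ)`. -/
def slNorm {d : ℕ} (g : SL d) : ℝ :=
  ∑ i, ∑ j, |((g : Matrix (Fin d) (Fin d) ℤ) i j : ℝ)|

/-- `ρ` has an exponential moment: `∫ ‖g‖^ε dρ(g) < ∞` for some `ε > 0`. -/
def HasExpMoment {d : ℕ} (ρ : Measure (SL d)) : Prop :=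
  ∃ ε : ℝ, 0 < ε ∧ ∫⁻ g, ENNReal.ofReal (slNorm g ^ ε) ∂ρ ≠ ∞

/-- The subgroup generated by the support of `ρ`. -/
def suppGroup {d : ℕ} (ρ : Measure (SL d)) : Subgroup (SL d) :=
  Subgroup.closure {g : SL d | ρ {g} ≠ 0}

/-- A subgroup of `SL_d(ℤ)` acts strongly irreducibly on `ℝ^d` if it fixes no nonempty finite
union of proper nonzero subspaces. -/
def StronglyIrreducible {d : ℕ} (Γ : Subgroup (SL d)) : Prop :=
  ¬ ∃ S : Finset (Submodule ℝ (Fin d → ℝ)), S.Nonempty ∧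
      (∀ V ∈ S, V ≠ ⊥ ∧ V ≠ ⊤) ∧
      ∀ g ∈ Γ, ∀ V ∈ S, V.map (matR g).mulVecLin ∈ S

/-- A subgroup of `SL_d(ℤ)` acts proximally on `ℝ^d` if some element `h` admits an invariant
line `L` and an invariant complementary hyperplane `W` such that the spectral radius of `h`
restricted to `W` is strictly smaller than the one restricted to `L`. -/
def Proximal {d : ℕ} (Γ : Subgroup (SL d)) : Prop :=
  ∃ h ∈ Γ, ∃ L W : Submodule ℝ (Fin d → ℝ),
    IsCompl L W ∧ Module.finrank ℝ L = 1 ∧ Module.finrank ℝ W = d - 1 ∧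
    ∃ (hL : ∀ v ∈ L, (matR h).mulVecLin v ∈ L) (hW : ∀ v ∈ W, (matR h).mulVecLin v ∈ W),
      spectralRadius ℝ (LinearMap.toContinuousLinearMap ((matR h).mulVecLin.restrict hW)) <
      spectralRadius ℝ (LinearMap.toContinuousLinearMap ((matR h).mulVecLin.restrict hL))

/-- The product `g_n ⋯ g_1` of an `n`-tuple `(g_1, …, g_n)`. -/
def finWordProd {d : ℕ} {n : ℕ} (g : Fin n → SL d) : SL d :=
  (List.ofFn g).reverse.prod

/-- The measure `ρ^{∗n} ∗ δ_x`: the law of `g_n ⋯ g_1 x` where `(g_i)` are i.i.d. of law `ρ`. -/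
noncomputable def walkLaw {d : ℕ} (ρ : Measure (SL d)) (n : ℕ) (x : Torus d) :
    Measure (Torus d) :=
  Measure.map (fun g : Fin n → SL d => torusSMul (finWordProd g) x)
    (Measure.pi fun _ : Fin n => ρ)

/-- `‖f‖_γ ≤ K` for the `γ`-Hölder norm on the torus. -/
def HolderNormLE {d : ℕ} (γ : ℝ) (f : Torus d → ℝ) (K : ℝ) : Prop :=
  ∃ A B : ℝ, 0 ≤ A ∧ 0 ≤ B ∧ A + B ≤ K ∧ (∀ x, |f x| ≤ A) ∧
    ∀ x y : Torus d, |f x - f y| ≤ B * dist x y ^ γ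

/-- The diophantine height `h_φ(x) = sup_{p/q} 1/(φ(q) d(x,p/q))`, as a `[0,∞]`-valued
function; the supremum runs over the rational points `p` of the torus and the positive
integers `q` with `q • p = 0`. -/
noncomputable def diophHeight {d : ℕ} (φ : ℝ → ℝ) (x : Torus d) : ℝ≥0∞ :=
  ⨆ (q : ℕ) (_ : 0 < q) (p : Torus d) (_ : q • p = 0),
    (ENNReal.ofReal (φ q) * edist x p)⁻¹

/-- `p` is a primitive rational point of the torus with denominator exactly `Q`. -/
def IsPrimitivePt {d : ℕ} (Q : ℕ) (p : Torus d) : Prop :=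
  Q • p = 0 ∧ ∀ q : ℕ, 0 < q → q < Q → q • p ≠ 0

/-- The drift function `u_φ(x) = 1 + ∑_{Q ≥ 1} φ(Q)^{−δ} ∑_{p ∈ X_Q} u₀(x − p)`. -/
noncomputable def uPhi {d : ℕ} (δ : ℝ) (φ : ℕ → ℝ) (u₀ : Torus d → ℝ≥0∞)
    (x : Torus d) : ℝ≥0∞ :=
  1 + ∑' Q : ℕ, ENNReal.ofReal (φ (Q + 1) ^ (-δ)) *
    ∑' p : {p : Torus d // IsPrimitivePt (Q + 1) p}, u₀ (x - (p : Torus d))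

lemma torusSMul_sub' {d : ℕ} (g : SL d) (x y : Torus d) :
    torusSMul g (x - y) = torusSMul g x - torusSMul g y := by
  funext i
  simp [torusSMul, smul_sub, Finset.sum_sub_distrib]

lemma torusSMul_nsmul' {d : ℕ} (g : SL d) (n : ℕ) (y : Torus d) :
    torusSMul g (n • y) = n • torusSMul g y := by
  funext i
  simp only [torusSMul, Pi.smul_apply, Finset.smul_sum]
  exact Finset.sum_congr rfl fun j _ => smul_comm _ _ _

lemma torusSMul_zero' {d : ℕ} (g : SL d) : torusSMul g (0 : Torus d) = 0 := by
  funext i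
  simp [torusSMul]

lemma torusSMul_mul' {d : ℕ} (g h : SL d) (x : Torus d) :
    torusSMul g (torusSMul h x) = torusSMul (g * h) x := by
  funext i
  simp only [torusSMul, Matrix.SpecialLinearGroup.coe_mul, Matrix.mul_apply, Finset.smul_sum,
    Finset.sum_smul, mul_smul]
  exact Finset.sum_comm

lemma torusSMul_one' {d : ℕ} (x : Torus d) : torusSMul (1 : SL d) x = x := by
  funext i
  simp [torusSMul, Matrix.one_apply, ite_smul]

lemma isPrimitivePt_smul' {d : ℕ} (g : SL d) {Q : ℕ} {p : Torus d} (hp : IsPrimitivePt Q p) :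
    IsPrimitivePt Q (torusSMul g p) := by
  refine ⟨by rw [← torusSMul_nsmul', hp.1, torusSMul_zero'], fun q hq hqQ h => ?_⟩
  refine hp.2 q hq hqQ ?_
  have := congrArg (torusSMul g⁻¹) h
  rwa [← torusSMul_nsmul', torusSMul_mul', inv_mul_cancel, torusSMul_one', torusSMul_zero'] at this

/-- `SL_d(ℤ)` permutes the primitive points. -/
noncomputable def primEquiv {d : ℕ} (g : SL d) (Q : ℕ) :
    {p : Torus d // IsPrimitivePt Q p} ≃ {p : Torus d // IsPrimitivePt Q p} where
  toFun p := ⟨torusSMul g p, isPrimitivePt_smul' g p.2⟩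
  invFun p := ⟨torusSMul g⁻¹ p, isPrimitivePt_smul' g⁻¹ p.2⟩
  left_inv p := by ext1; simp [torusSMul_mul', torusSMul_one']
  right_inv p := by ext1; simp [torusSMul_mul', torusSMul_one']

lemma prim_subset {d : ℕ} (Q : ℕ) (hQ : 0 < Q) :
    {p : Torus d | IsPrimitivePt Q p} ⊆
      range (fun (m : Fin d → Fin Q) => (fun i => (((m i : ℕ) / (Q : ℝ) * 1 : ℝ) : UnitAddCircle))) := by
  intro p hp
  have h : ∀ i, ∃ m : Fin Q, (((m : ℕ) / (Q : ℝ) * 1 : ℝ) : UnitAddCircle) = p i := by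
    intro i
    have h1 : Q • p i = 0 := congrFun hp.1 i
    obtain ⟨m, hm, h2⟩ := (AddCircle.nsmul_eq_zero_iff (p := (1 : ℝ)) hQ).1 h1
    exact ⟨⟨m, hm⟩, h2⟩
  choose m hm using h
  exact ⟨m, funext hm⟩

lemma prim_encard {d : ℕ} (Q : ℕ) (hQ : 0 < Q) :
    {p : Torus d | IsPrimitivePt Q p}.encard ≤ ((Q ^ d : ℕ) : ℕ∞) := by
  refine (encard_le_encard (prim_subset Q hQ)).trans ?_
  rw [← image_univ]
  refine (encard_image_le _ _).trans ?_
  simp [encard_univ]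

lemma prim_tsum_le {d : ℕ} (Q : ℕ) (hQ : 0 < Q) (c : ℝ≥0∞) :
    ∑' _ : {p : Torus d // IsPrimitivePt Q p}, c ≤ ((Q ^ d : ℕ) : ℝ≥0∞) * c := by
  have h := prim_encard (d := d) Q hQ
  rw [ENNReal.tsum_const]
  gcongr
  have h2 : ENat.card {p : Torus d // IsPrimitivePt Q p} ≤ ((Q ^ d : ℕ) : ℕ∞) := h
  exact_mod_cast (ENat.toENNReal_le.2 h2)

/-- If `Pu₀ ≤ a·u₀ + b` with `a ∈ (0,1)`, and `φ : ℕ → ℝ₊*` is strictly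
increasing with `∑ n^d/φ(n)^δ < ∞`, then `u_φ` satisfies `Pu_φ ≤ a'·u_φ + b'` for some
`a' ∈ (0,1)` and `b' ∈ ℝ`. -/
theorem stmt15 (d : ℕ) (ρ : Measure (SL d)) (hρ : IsProbabilityMeasure ρ)
    (δ : ℝ) (hδ : 0 < δ) (a b : ℝ) (ha0 : 0 < a) (ha1 : a < 1)
    (u₀ : Torus d → ℝ≥0∞) (hu₀ : Measurable u₀)
    (hdrift : ∀ x : Torus d,
      (∫⁻ g : SL d, u₀ (torusSMul g x) ∂ρ) ≤ ENNReal.ofReal a * u₀ x + ENNReal.ofReal b)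
    (φ : ℕ → ℝ) (hφmono : StrictMono φ) (hφpos : ∀ n, 0 < φ n)
    (hφsum : Summable fun n : ℕ => (n : ℝ) ^ d / φ n ^ δ) :
    ∃ a' b' : ℝ, 0 < a' ∧ a' < 1 ∧
      ∀ x : Torus d,
        (∫⁻ g : SL d, uPhi δ φ u₀ (torusSMul g x) ∂ρ) ≤
          ENNReal.ofReal a' * uPhi δ φ u₀ x + ENNReal.ofReal b' := by
  have hmeas : ∀ f : SL d → ℝ≥0∞, Measurable f := fun f => measurable_from_top
  set w : ℕ → ℝ≥0∞ := fun Q => ENNReal.ofReal (φ (Q + 1) ^ (-δ)) with hw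
  set C : ℝ≥0∞ := ∑' Q : ℕ, w Q * (((Q + 1) ^ d : ℕ) : ℝ≥0∞) with hC
  have hCfin : C ≠ ∞ := by
    have h1 := (summable_nat_add_iff 1).2 hφsum
    have h2 : C = ∑' Q : ℕ, ENNReal.ofReal (((Q + 1 : ℕ) : ℝ) ^ d / φ (Q + 1) ^ δ) := by
      refine tsum_congr fun Q => ?_
      rw [hw, ← ENNReal.ofReal_natCast, ← ENNReal.ofReal_mul (Real.rpow_nonneg (hφpos _).le _),
        Real.rpow_neg (hφpos _).le, mul_comm, div_eq_mul_inv]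
      push_cast
      rfl
    rw [h2]
    exact h1.tsum_ofReal_ne_top
  have hcount : ∀ Q : ℕ, Countable {p : Torus d // IsPrimitivePt (Q + 1) p} := fun Q =>
    ((finite_range _).subset (prim_subset (d := d) (Q + 1) Q.succ_pos)).countable.to_subtype
  have key : ∀ (Q : ℕ) (x : Torus d),
      ∫⁻ g : SL d, ∑' p : {p : Torus d // IsPrimitivePt (Q + 1) p},
        u₀ (torusSMul g x - (p : Torus d)) ∂ρ ≤
      ENNReal.ofReal a * (∑' p : {p : Torus d // IsPrimitivePt (Q + 1) p}, u₀ (x - (p : Torus d)))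
        + (((Q + 1) ^ d : ℕ) : ℝ≥0∞) * ENNReal.ofReal b := by
    intro Q x
    have := hcount Q
    calc _ = ∫⁻ g : SL d, ∑' p : {p : Torus d // IsPrimitivePt (Q + 1) p},
              u₀ (torusSMul g (x - (p : Torus d))) ∂ρ := by
            refine lintegral_congr fun g => ?_
            rw [← (primEquiv g (Q + 1)).tsum_eq]
            simp only [torusSMul_sub']
            rfl
      _ = ∑' p : {p : Torus d // IsPrimitivePt (Q + 1) p},
            ∫⁻ g : SL d, u₀ (torusSMul g (x - (p : Torus d))) ∂ρ :=
            lintegral_tsum fun p => (hmeas _).aemeasurable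
      _ ≤ ∑' p : {p : Torus d // IsPrimitivePt (Q + 1) p},
            (ENNReal.ofReal a * u₀ (x - (p : Torus d)) + ENNReal.ofReal b) :=
            ENNReal.tsum_le_tsum fun p => hdrift _
      _ ≤ _ := by
            rw [ENNReal.tsum_add, ENNReal.tsum_mul_left]
            gcongr
            exact prim_tsum_le (Q + 1) Q.succ_pos _
  refine ⟨a, (1 + C * ENNReal.ofReal b).toReal, ha0, ha1, fun x => ?_⟩
  rw [ENNReal.ofReal_toReal (by finiteness)]
  simp only [uPhi]
  rw [lintegral_add_left measurable_const, lintegral_tsum fun Q => (hmeas _).aemeasurable]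
  simp only [lintegral_const, measure_univ, mul_one]
  calc _ ≤ 1 + ∑' Q : ℕ, (ENNReal.ofReal a * (w Q *
            ∑' p : {p : Torus d // IsPrimitivePt (Q + 1) p}, u₀ (x - (p : Torus d)))
            + w Q * (((Q + 1) ^ d : ℕ) : ℝ≥0∞) * ENNReal.ofReal b) := by
          gcongr with Q
          rw [lintegral_const_mul _ (hmeas _)]
          refine (mul_le_mul_right (key Q x) _).trans (le_of_eq ?_)
          simp only [hw]
          ring
    _ = ENNReal.ofReal a * (∑' Q : ℕ, w Q *
            ∑' p : {p : Torus d // IsPrimitivePt (Q + 1) p}, u₀ (x - (p : Torus d)))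
            + (1 + C * ENNReal.ofReal b) := by
          rw [ENNReal.tsum_add, ENNReal.tsum_mul_left, ENNReal.tsum_mul_right]
          ring
    _ ≤ _ := by
          gcongr
          exact le_add_self
end
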